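/- Let M and N be positive integers. Then ∑_{m=1}^{M} (1 − m/M) · gcd(2m, N) ≤ τ(N) · M, where τ(N) is the number of positive divisors of N. -/

import Mathlib

/-! Bound `gcd (k m, N)` by the sum of all common divisors `d` of `k m` and `N`, and sum over `m`
first. The condition `d ∣ k m` says that `e = d / gcd (d, k)` divides `m`, and completing the
square bounds the sum of the weights `1 - m / M` over the multiples of `e` by `M / (2 e)`. So each
`d` contributes at most `M gcd (d, k) / 2`, which is at most `M` when `k = 2`. -/

open Finset

theorem two_mul_mul_sum_Icc_one_sub_mul {R : Type*} [CommRing R] (x : R) (n : ℕ) :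
    2 * x * ∑ j ∈ Icc 1 n, (1 - x * j) = 1 - ((1 - x * n) ^ 2 + x ^ 2 * n) := by
  induction n with
  | zero => simp
  | succ n ih =>
    rw [sum_Icc_succ_top n.succ_pos, mul_add, ih]
    push_cast
    ring

theorem sum_Icc_filter_dvd {α : Type*} [AddCommMonoid α] (f : ℕ → α) (n : ℕ) {e : ℕ}
    (he : 0 < e) : ∑ m ∈ Icc 1 n with e ∣ m, f m = ∑ j ∈ Icc 1 (n / e), f (e * j) := by
  have multiples : {m ∈ Icc 1 n | e ∣ m} = (Icc 1 (n / e)).image (e * ·) := by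
    ext m
    simp only [mem_filter, mem_Icc, mem_image, Nat.le_div_iff_mul_le he]
    constructor
    · rintro ⟨⟨hpos, hle⟩, j, rfl⟩
      exact ⟨j, ⟨Nat.pos_of_mul_pos_left hpos, mul_comm e j ▸ hle⟩, rfl⟩
    · rintro ⟨j, ⟨hpos, hle⟩, rfl⟩
      exact ⟨⟨Nat.mul_pos he hpos, mul_comm j e ▸ hle⟩, dvd_mul_right e j⟩
  rw [multiples, sum_image (mul_right_injective₀ he.ne').injOn]

theorem dvd_mul_iff_div_gcd_dvd {d : ℕ} (hd : 0 < d) (k m : ℕ) :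
    d ∣ k * m ↔ d / d.gcd k ∣ m := by
  rw [Nat.div_dvd_iff_dvd_mul (Nat.gcd_dvd_left d k) (Nat.gcd_pos_of_pos_left k hd),
    Nat.dvd_gcd_mul_iff_dvd_mul]

theorem gcd_le_sum_common_divisors (a : ℕ) {N : ℕ} (hN : N ≠ 0) :
    a.gcd N ≤ ∑ d ∈ N.divisors with d ∣ a, d :=
  single_le_sum (f := id) (fun _ _ => Nat.zero_le _)
    (mem_filter.2 ⟨Nat.mem_divisors.2 ⟨Nat.gcd_dvd_right a N, hN⟩, Nat.gcd_dvd_left a N⟩)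

theorem sum_mul_gcd_le_sum_divisors {R ι : Type*} [CommSemiring R] [PartialOrder R]
    [IsOrderedRing R] {s : Finset ι} {w : ι → R} (hw : ∀ i ∈ s, 0 ≤ w i) (a : ι → ℕ) {N : ℕ}
    (hN : N ≠ 0) :
    ∑ i ∈ s, w i * ((a i).gcd N : R) ≤ ∑ d ∈ N.divisors, d * ∑ i ∈ s with d ∣ a i, w i :=
  calc ∑ i ∈ s, w i * ((a i).gcd N : R)
      ≤ ∑ i ∈ s, w i * ∑ d ∈ N.divisors with d ∣ a i, (d : R) := by
        gcongr with i hi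
        · exact hw i hi
        · rw [← Nat.cast_sum]
          exact Nat.mono_cast (gcd_le_sum_common_divisors (a i) hN)
    _ = ∑ d ∈ N.divisors, d * ∑ i ∈ s with d ∣ a i, w i := by
        simp only [mul_sum, sum_filter, mul_ite, mul_zero]
        rw [sum_comm]
        simp only [mul_comm]

section OrderedField

variable {𝕜 : Type*} [Field 𝕜] [LinearOrder 𝕜] [IsStrictOrderedRing 𝕜]

theorem two_mul_mul_sum_filter_dvd_one_sub_div_le (M : ℕ) {e : ℕ} (he : 0 < e) :
    2 * (e : 𝕜) * ∑ m ∈ Icc 1 M with e ∣ m, (1 - (m : 𝕜) / M) ≤ M := by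
  rcases M.eq_zero_or_pos with rfl | hM
  · simp
  have hM' : (M : 𝕜) ≠ 0 := by exact_mod_cast hM.ne'
  set x : 𝕜 := e / M with hx
  have hxM : (e : 𝕜) = M * x := (mul_div_cancel₀ _ hM').symm
  calc 2 * (e : 𝕜) * ∑ m ∈ Icc 1 M with e ∣ m, (1 - (m : 𝕜) / M)
      = M * (2 * x * ∑ j ∈ Icc 1 (M / e), (1 - x * j)) := by
        rw [sum_Icc_filter_dvd _ M he]
        simp only [Nat.cast_mul, mul_div_right_comm, ← hx]
        rw [hxM]
        ring
    _ ≤ M * 1 := by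
        gcongr
        rw [two_mul_mul_sum_Icc_one_sub_mul]
        exact sub_le_self 1 (by positivity)
    _ = M := mul_one _

theorem mul_sum_filter_dvd_mul_one_sub_div_le (M k : ℕ) {d : ℕ} (hd : 0 < d) :
    (d : 𝕜) * ∑ m ∈ Icc 1 M with d ∣ k * m, (1 - (m : 𝕜) / M) ≤ M / 2 * d.gcd k := by
  simp only [dvd_mul_iff_div_gcd_dvd hd]
  set e := d / d.gcd k
  have he : 0 < e := Nat.div_gcd_pos_of_pos_left k hd
  have hde : (d : 𝕜) = d.gcd k * e := by
    exact_mod_cast (Nat.mul_div_cancel' (Nat.gcd_dvd_left d k)).symm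
  have hbound := two_mul_mul_sum_filter_dvd_one_sub_div_le (𝕜 := 𝕜) M he
  calc (d : 𝕜) * ∑ m ∈ Icc 1 M with e ∣ m, (1 - (m : 𝕜) / M)
      = (2 * e * ∑ m ∈ Icc 1 M with e ∣ m, (1 - (m : 𝕜) / M)) / 2 * d.gcd k := by
        rw [hde]
        ring
    _ ≤ M / 2 * d.gcd k := by gcongr

theorem gcd_weighted_sum_le_general (M k : ℕ) {N : ℕ} (hN : N ≠ 0) :
    ∑ m ∈ Icc 1 M, (1 - (m : 𝕜) / M) * ((k * m).gcd N : 𝕜) ≤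
      M / 2 * ∑ d ∈ N.divisors, (d.gcd k : 𝕜) := by
  have weight_nonneg : ∀ m ∈ Icc 1 M, 0 ≤ 1 - (m : 𝕜) / M := fun m hm =>
    sub_nonneg.2 (div_le_one_of_le₀ (Nat.cast_le.2 (mem_Icc.1 hm).2) M.cast_nonneg)
  refine (sum_mul_gcd_le_sum_divisors weight_nonneg (k * ·) hN).trans ?_
  rw [mul_sum]
  exact sum_le_sum fun d hd =>
    mul_sum_filter_dvd_mul_one_sub_div_le M k (Nat.pos_of_mem_divisors hd)

end OrderedField

/-- `∑_{m=1}^{M} (1 − m/M) · gcd(2m, N) ≤ τ(N) · M`. -/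
theorem gcd_weighted_sum_le (M N : ℕ) (hM : 0 < M) (hN : 0 < N) :
    ∑ m ∈ Finset.Icc 1 M, (1 - (m : ℝ) / M) * (Nat.gcd (2 * m) N : ℝ) ≤
      (N.divisors.card : ℝ) * M := by
  have gcd_two_le (d : ℕ) : (d.gcd 2 : ℝ) ≤ 2 := by exact_mod_cast Nat.gcd_le_right d two_pos
  calc ∑ m ∈ Finset.Icc 1 M, (1 - (m : ℝ) / M) * (Nat.gcd (2 * m) N : ℝ)
      ≤ M / 2 * ∑ d ∈ N.divisors, (d.gcd 2 : ℝ) := gcd_weighted_sum_le_general M 2 hN.ne'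
    _ ≤ M / 2 * ∑ _d ∈ N.divisors, 2 := by gcongr; exact gcd_two_le _
    _ = N.divisors.card * M := by rw [sum_const, nsmul_eq_mul]; ring
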